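/- arXiv:1307.8290 — 9 statements merged into one kernel-verified Lean document; each statement's English description precedes it below -/
import Mathlib

section
/- Every eigenvalue (over the complex numbers) of the matrix A has strictly negative real part. -/
/-!
By the symmetry of `γ`, the off-diagonal entries of column `k` of `A` sum to `∑ i, γ k i / L k`,
which is smaller than `-A k k` by `μ k / L k + θ k > 0`. Hence, if `0 ≤ z.re`, the matrix `z - A`
is strictly diagonally dominant by columns, because `‖z - A k k‖ ≥ z.re - A k k ≥ -A k k`. Such a
matrix is nonsingular (Gershgorin, `det_ne_zero_of_sum_col_lt_diag`), so `z` is not a root of the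
characteristic polynomial.
-/

/-- Every eigenvalue (over ℂ) of the matrix `A` of the one-echelon inventory model
has strictly negative real part. -/
theorem eigenvalues_re_neg
    (n : ℕ) (hn : 1 ≤ n)
    (L μ θ : Fin n → ℝ) (γ : Fin n → Fin n → ℝ)
    (hL : ∀ i, 0 < L i) (hμ : ∀ i, 0 < μ i) (hθ : ∀ i, 0 ≤ θ i)
    (hγ : ∀ i j, 0 ≤ γ i j) (hγdiag : ∀ i, γ i i = 0) (hγsymm : ∀ i j, γ i j = γ j i)
    (A : Matrix (Fin n) (Fin n) ℝ)
    (hA : ∀ i j, A i j =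
      if i = j then -(μ i / L i + θ i + ∑ k, γ i k / L i) else γ i j / L j) :
    ∀ z : ℂ, (A.map (Complex.ofReal : ℝ → ℂ)).charpoly.IsRoot z → z.re < 0 := by
  intro z hz
  by_contra! hre
  rw [Polynomial.IsRoot.def, Matrix.eval_charpoly] at hz
  refine det_ne_zero_of_sum_col_lt_diag (fun k => ?_) hz
  -- The off-diagonal sum of column `k`, rewritten as a row sum of `γ` by symmetry.
  have hoff : ∑ i ∈ Finset.univ.erase k,
      ‖(Matrix.scalar (Fin n) z - A.map (Complex.ofReal : ℝ → ℂ)) i k‖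
        = ∑ i, γ k i / L k := by
    rw [← Finset.sum_erase Finset.univ (a := k) (by simp [hγdiag])]
    refine Finset.sum_congr rfl fun i hi => ?_
    have hik : i ≠ k := Finset.ne_of_mem_erase hi
    simp [hA, hik, abs_of_nonneg (hγ i k), abs_of_pos (hL k), hγsymm k i]
  have hdiag : (z - (A k k : ℂ)).re
      ≤ ‖(Matrix.scalar (Fin n) z - A.map (Complex.ofReal : ℝ → ℂ)) k k‖ := by
    simpa using Complex.re_le_norm (z - (A k k : ℂ))
  have hAkk : A k k = -(μ k / L k + θ k + ∑ i, γ k i / L k) := by simp [hA]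
  rw [Complex.sub_re, Complex.ofReal_re, hAkk] at hdiag
  rw [hoff]
  linarith [div_pos (hμ k) (hL k), hθ k]
end

section
/- The matrix A is nonsingular (invertible). -/
/-!
The matrix `A` is strictly diagonally dominant by columns: by symmetry of `γ`, the off-diagonal
part of column `k` sums to `∑ i, γ k i / L k`, which `|A k k|` exceeds by `μ k / L k + θ k > 0`.
Hence `det A ≠ 0` by the Gershgorin criterion `det_ne_zero_of_sum_col_lt_diag`.
-/

/-- The matrix `A` of the one-echelon inventory model is nonsingular (invertible). -/
theorem matrix_A_invertible
    (n : ℕ) (hn : 1 ≤ n)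
    (L μ θ : Fin n → ℝ) (γ : Fin n → Fin n → ℝ)
    (hL : ∀ i, 0 < L i) (hμ : ∀ i, 0 < μ i) (hθ : ∀ i, 0 ≤ θ i)
    (hγ : ∀ i j, 0 ≤ γ i j) (hγdiag : ∀ i, γ i i = 0) (hγsymm : ∀ i j, γ i j = γ j i)
    (A : Matrix (Fin n) (Fin n) ℝ)
    (hA : ∀ i j, A i j =
      if i = j then -(μ i / L i + θ i + ∑ k, γ i k / L i) else γ i j / L j) :
    IsUnit A := by
  rw [Matrix.isUnit_iff_isUnit_det, isUnit_iff_ne_zero]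
  refine det_ne_zero_of_sum_col_lt_diag fun k => ?_
  have hsum : ∑ i ∈ Finset.univ.erase k, ‖A i k‖ = ∑ i, γ k i / L k := by
    rw [← Finset.sum_erase (a := k) Finset.univ (by simp [hγdiag])]
    refine Finset.sum_congr rfl fun i hi => ?_
    rw [hA, if_neg (Finset.ne_of_mem_erase hi), hγsymm i k,
      Real.norm_of_nonneg (div_nonneg (hγ k i) (hL k).le)]
  have hnonneg : 0 ≤ ∑ i, γ k i / L k :=
    Finset.sum_nonneg fun i _ => div_nonneg (hγ k i) (hL k).le
  have hpos : 0 < μ k / L k := div_pos (hμ k) (hL k)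
  have hθk := hθ k
  rw [hsum, hA, if_pos rfl, norm_neg, Real.norm_of_nonneg (by linarith)]
  linarith
end

section
/- If μ_1/L_1 = μ_2/L_2 = ⋯ = μ_n/L_n and θ_1 = θ_2 = ⋯ = θ_n, then the components of the equilibrium point y* = −A^{-1} b satisfy Σ_{i=1}^n y_i* = y_a*, where y_a* = (μ_a − λ_a)/(μ_a/L_a + θ̄). -/
/-!
Since `γ` is symmetric with zero diagonal, transshipments cancel in the column sums of `A`:
column `j` sums to `-(μ j / L j + θ j)`. The same cancellation makes `A` strictly diagonally
dominant by columns, hence invertible. When all ratios `μ j / L j` equal `r` and all `θ j` equal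
`t`, the all-ones row vector is therefore a left eigenvector of `A` for `-(r + t)`. Summing the
components of `A y* = -b` gives `(r + t) ∑ y*ᵢ = ∑ bᵢ = μa - lama`, while `μa / La = r` and
`θbar = t`.
-/

open Matrix

/-- If `μ₁/L₁ = ⋯ = μₙ/Lₙ` and `θ₁ = ⋯ = θₙ`, then the components of the equilibrium
point `y* = −A⁻¹ b` satisfy `Σᵢ yᵢ* = y_a*`, where
`y_a* = (μ_a − λ_a)/(μ_a/L_a + θ̄)` is the equilibrium of the aggregated model. -/
theorem sum_equilibrium_eq_aggregated_equilibrium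
    (n : ℕ) (hn : 1 ≤ n)
    (L μ θ lam : Fin n → ℝ) (γ : Fin n → Fin n → ℝ)
    (hL : ∀ i, 0 < L i) (hμ : ∀ i, 0 < μ i) (hθ : ∀ i, 0 ≤ θ i)
    (hγ : ∀ i j, 0 ≤ γ i j) (hγdiag : ∀ i, γ i i = 0) (hγsymm : ∀ i j, γ i j = γ j i)
    (A : Matrix (Fin n) (Fin n) ℝ)
    (hA : ∀ i j, A i j =
      if i = j then -(μ i / L i + θ i + ∑ k, γ i k / L i) else γ i j / L j)
    (b : Fin n → ℝ) (hb : ∀ i, b i = μ i - lam i)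
    (hrat : ∀ i j, μ i / L i = μ j / L j) (hθeq : ∀ i j, θ i = θ j)
    (La μa lama θbar : ℝ)
    (hLa : La = ∑ i, L i) (hμa : μa = ∑ i, μ i) (hlama : lama = ∑ i, lam i)
    (hθbar : θbar = (1 / (n : ℝ)) * ∑ i, θ i) :
    ∑ i, (-(A⁻¹.mulVec b)) i = (μa - lama) / (μa / La + θbar) := by
  have hne : (n : ℝ) ≠ 0 := by
    have : n ≠ 0 := by omega
    exact_mod_cast this
  have i0 : Fin n := ⟨0, hn⟩
  -- the off-diagonal part of column `j` balances the outgoing rates on the diagonal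
  have hoff : ∀ j, ∑ i ∈ Finset.univ.erase j, A i j = ∑ k, γ j k / L j := by
    intro j
    rw [← Finset.add_sum_erase _ (fun k => γ j k / L j) (Finset.mem_univ j)]
    simp only [hγdiag, zero_div, zero_add]
    refine Finset.sum_congr rfl fun i hi => ?_
    rw [hA, if_neg (Finset.ne_of_mem_erase hi), hγsymm]
  have hr : ∀ j, 0 < μ j / L j := fun j => div_pos (hμ j) (hL j)
  have hS : ∀ j, 0 ≤ ∑ k, γ j k / L j := fun j =>
    Finset.sum_nonneg fun k _ => div_nonneg (hγ j k) (hL j).le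
  have hdet : A.det ≠ 0 := by
    refine det_ne_zero_of_sum_col_lt_diag fun j => ?_
    have habs : ∑ i ∈ Finset.univ.erase j, ‖A i j‖ = ∑ k, γ j k / L j := by
      rw [← hoff]
      refine Finset.sum_congr rfl fun i hi => ?_
      rw [hA, if_neg (Finset.ne_of_mem_erase hi), Real.norm_of_nonneg]
      exact div_nonneg (hγ i j) (hL j).le
    rw [habs, hA, if_pos rfl, norm_neg, Real.norm_of_nonneg]
    · linarith [hr j, hθ j]
    · linarith [hr j, hθ j, hS j]
  have hcol : ∀ j, ∑ i, A i j = -(μ i0 / L i0 + θ i0) := by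
    intro j
    rw [← Finset.add_sum_erase _ (fun i => A i j) (Finset.mem_univ j), hoff, hA, if_pos rfl,
      hrat i0 j, hθeq i0 j]
    ring
  have hc : 0 < μ i0 / L i0 + θ i0 := by linarith [hr i0, hθ i0]
  have hLpos : 0 < La := by
    rw [hLa]
    exact Finset.sum_pos (fun i _ => hL i) ⟨i0, Finset.mem_univ _⟩
  have hratio : μa / La = μ i0 / L i0 := by
    rw [div_eq_iff hLpos.ne', hμa, hLa, Finset.mul_sum]
    refine Finset.sum_congr rfl fun i _ => ?_
    rw [hrat i0 i, div_mul_cancel₀ _ (hL i).ne']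
  have hθavg : θbar = θ i0 := by
    rw [hθbar, Finset.sum_congr rfl fun i _ => hθeq i i0]
    simp [hne]
  have hsolve : A *ᵥ (A⁻¹ *ᵥ b) = b := by
    rw [mulVec_mulVec, mul_nonsing_inv A (isUnit_iff_ne_zero.mpr hdet), one_mulVec]
  have hsum : ∑ i, b i = -(μ i0 / L i0 + θ i0) * ∑ j, (A⁻¹ *ᵥ b) j := by
    calc ∑ i, b i = ∑ i, ∑ j, A i j * (A⁻¹ *ᵥ b) j :=
          Finset.sum_congr rfl fun i _ => (congrFun hsolve i).symm
      _ = ∑ j, (∑ i, A i j) * (A⁻¹ *ᵥ b) j := by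
          rw [Finset.sum_comm]
          simp only [Finset.sum_mul]
      _ = _ := by simp only [hcol, Finset.mul_sum]
  rw [hratio, hθavg, eq_div_iff hc.ne', hμa, hlama, ← Finset.sum_sub_distrib,
    ← Finset.sum_congr rfl fun i _ => hb i, hsum]
  simp only [Pi.neg_apply, Finset.sum_neg_distrib]
  ring
end

section
/- Suppose μ_1/L_1 = μ_2/L_2 = ⋯ = μ_n/L_n and θ_1 = θ_2 = ⋯ = θ_n. Let y : [0,∞) → ℝ^n be a solution of y′ = A y + b and let y_a : [0,∞) → ℝ be a solution of y_a′(t) = −(μ_a/L_a + θ̄) y_a(t) + (μ_a − λ_a). If Σ_{i=1}^n y_i(0) = y_a(0), then Σ_{i=1}^n y_i(t) = y_a(t) for all t ≥ 0. -/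
/-!
Under the two homogeneity hypotheses every column of `A` sums to `-(μ_a/L_a + θ̄)`: the transshipment
terms of a column cancel by symmetry of `γ` (`column_sum_eq`), the common ratio `μᵢ/Lᵢ` equals the ratio of the sums
`μ_a/L_a`, and the common `θᵢ` equals its mean. Hence `Σᵢ yᵢ` solves the same
scalar linear equation as `y_a`, and the difference `e` of the two satisfies `e′ = -c e` and
`e(0) = 0`, which forces `e = 0` since `e(t) exp(c t)` is constant
(`eq_zero_of_hasDerivWithinAt_neg_mul`).
-/

open Matrix

/-- Uniqueness for the scalar equation `e′ = -c e` on `[0, ∞)`, via the integrating factor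
`exp (c t)`. -/
lemma eq_zero_of_hasDerivWithinAt_neg_mul (c : ℝ) (e : ℝ → ℝ)
    (he : ∀ t ∈ Set.Ici (0 : ℝ), HasDerivWithinAt e (-c * e t) (Set.Ici 0) t)
    (h0 : e 0 = 0) : ∀ t ∈ Set.Ici (0 : ℝ), e t = 0 := by
  intro t ht
  have hderiv : ∀ x ∈ Set.Ici (0 : ℝ),
      HasDerivWithinAt (fun s => e s * Real.exp (c * s)) 0 (Set.Ici 0) x := by
    intro x hx
    have hexp : HasDerivAt (fun s : ℝ => Real.exp (c * s)) (Real.exp (c * x) * (c * 1)) x :=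
      ((hasDerivAt_id x).const_mul c).exp
    refine ((he x hx).fun_mul hexp.hasDerivWithinAt).congr_deriv ?_
    ring
  have hconst := constant_of_has_deriv_right_zero (a := 0) (b := t)
    (f := fun s => e s * Real.exp (c * s))
    (fun x hx => ((hderiv x hx.1).continuousWithinAt).mono Set.Icc_subset_Ici_self)
    (fun x hx => (hderiv x hx.1).mono (Set.Ici_subset_Ici.mpr hx.1))
    t ⟨ht, le_rfl⟩
  simpa [h0, Real.exp_ne_zero] using hconst

/-- Transshipment drops out of the column sums of `A`: the outflow `Σₖ γⱼₖ/Lⱼ` on the diagonal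
cancels the off-diagonal entries of column `j`. -/
lemma column_sum_eq {n : ℕ} (L μ θ : Fin n → ℝ) (γ : Fin n → Fin n → ℝ)
    (hγdiag : ∀ i, γ i i = 0) (hγsymm : ∀ i j, γ i j = γ j i)
    (A : Matrix (Fin n) (Fin n) ℝ)
    (hA : ∀ i j, A i j =
      if i = j then -(μ i / L i + θ i + ∑ k, γ i k / L i) else γ i j / L j)
    (j : Fin n) : ∑ i, A i j = -(μ j / L j + θ j) := by
  -- Since `γ j j = 0`, the off-diagonal formula may be added on the diagonal as well.
  have hsplit : ∀ i, A i j =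
      (if i = j then -(μ j / L j + θ j + ∑ k, γ j k / L j) else 0) + γ j i / L j := by
    intro i
    rw [hA]
    split_ifs with h
    · subst h
      simp [hγdiag]
    · rw [hγsymm i j, zero_add]
  simp only [hsplit, Finset.sum_add_distrib, Finset.sum_ite_eq',
    Finset.mem_univ, if_true]
  ring

/-- Suppose `μ₁/L₁ = ⋯ = μₙ/Lₙ` and `θ₁ = ⋯ = θₙ`. If `y : [0,∞) → ℝⁿ` solves
`y′ = A y + b`, `y_a : [0,∞) → ℝ` solves the aggregated equation
`y_a′ = −(μ_a/L_a + θ̄) y_a + (μ_a − λ_a)`, and `Σᵢ yᵢ(0) = y_a(0)`, then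
`Σᵢ yᵢ(t) = y_a(t)` for all `t ≥ 0`. -/
theorem sum_solution_eq_aggregated_solution
    (n : ℕ) (hn : 1 ≤ n)
    (L μ θ lam : Fin n → ℝ) (γ : Fin n → Fin n → ℝ)
    (hL : ∀ i, 0 < L i) (hμ : ∀ i, 0 < μ i) (hθ : ∀ i, 0 ≤ θ i)
    (hγ : ∀ i j, 0 ≤ γ i j) (hγdiag : ∀ i, γ i i = 0) (hγsymm : ∀ i j, γ i j = γ j i)
    (A : Matrix (Fin n) (Fin n) ℝ)
    (hA : ∀ i j, A i j =
      if i = j then -(μ i / L i + θ i + ∑ k, γ i k / L i) else γ i j / L j)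
    (b : Fin n → ℝ) (hb : ∀ i, b i = μ i - lam i)
    (hrat : ∀ i j, μ i / L i = μ j / L j) (hθeq : ∀ i j, θ i = θ j)
    (La μa lama θbar : ℝ)
    (hLa : La = ∑ i, L i) (hμa : μa = ∑ i, μ i) (hlama : lama = ∑ i, lam i)
    (hθbar : θbar = (1 / (n : ℝ)) * ∑ i, θ i)
    (y : ℝ → Fin n → ℝ)
    (hy : ∀ t ∈ Set.Ici (0 : ℝ), HasDerivWithinAt y (A.mulVec (y t) + b) (Set.Ici 0) t)
    (ya : ℝ → ℝ)
    (hya : ∀ t ∈ Set.Ici (0 : ℝ),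
      HasDerivWithinAt ya (-(μa / La + θbar) * ya t + (μa - lama)) (Set.Ici 0) t)
    (h0 : ∑ i, y 0 i = ya 0) :
    ∀ t ∈ Set.Ici (0 : ℝ), ∑ i, y t i = ya t := by
  have hnpos : 0 < n := hn
  let i₀ : Fin n := ⟨0, hnpos⟩
  have hLapos : 0 < La := hLa ▸ Finset.sum_pos (fun i _ => hL i) ⟨i₀, Finset.mem_univ _⟩
  have hratio : ∀ j, μ j / L j = μa / La := by
    intro j
    rw [eq_div_iff hLapos.ne', hLa, hμa, Finset.mul_sum]
    refine Finset.sum_congr rfl fun i _ => ?_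
    rw [hrat j i, div_mul_cancel₀ _ (hL i).ne']
  have hmean : ∀ j, θ j = θbar := by
    intro j
    have hn0 : (n : ℝ) ≠ 0 := by exact_mod_cast hnpos.ne'
    rw [hθbar, Finset.sum_congr rfl fun i _ => hθeq i j]
    simp [hn0]
  have hsum : ∀ v : Fin n → ℝ,
      ∑ i, (A.mulVec v + b) i = -(μa / La + θbar) * ∑ i, v i + (μa - lama) := by
    intro v
    simp only [Pi.add_apply, Finset.sum_add_distrib, Matrix.mulVec, dotProduct]
    rw [Finset.sum_comm, Finset.mul_sum, hμa, hlama, ← Finset.sum_sub_distrib]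
    congr 1
    · refine Finset.sum_congr rfl fun j _ => ?_
      rw [← Finset.sum_mul, column_sum_eq L μ θ γ hγdiag hγsymm A hA j, hratio, hmean, ← hμa]
    · exact Finset.sum_congr rfl fun i _ => hb i
  intro t ht
  refine sub_eq_zero.mp (eq_zero_of_hasDerivWithinAt_neg_mul (μa / La + θbar)
    (fun s => ∑ i, y s i - ya s) (fun s hs => ?_) (sub_eq_zero.mpr h0) t ht)
  have hS : HasDerivWithinAt (fun s => ∑ i, y s i) (∑ i, (A.mulVec (y s) + b) i)
      (Set.Ici 0) s :=
    HasDerivWithinAt.fun_sum fun i _ => hasDerivWithinAt_pi.mp (hy s hs) i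
  refine (hS.fun_sub (hya s hs)).congr_deriv ?_
  rw [hsum]
  ring
end

section
/- Let x* ∈ ℝ^m satisfy F(x*) = 0 and 0 ≤ x_i* ≤ C_i for all i = 1, …, m. If the stability conditions μ_2/C_1 < μ_1/C_1 + θ_1, μ_i/C_{i−1} + μ_{i+1}/C_{i+1} < θ_i for 2 ≤ i ≤ m−1, and μ_m/C_{m−1} < θ_m hold, then every eigenvalue (over the complex numbers) of the Jacobian matrix DF(x*) has strictly negative real part; hence the equilibrium point x* is stable. -/
/-!
The system is a chain of transfers.  With the flow
`φᵢ(x) = μᵢ / Cᵢ₋₁ * xᵢ₋₁ * (1 - xᵢ / Cᵢ)` from echelon `i - 1` to echelon `i`, one has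
`Fᵢ = sourceᵢ - θᵢ xᵢ + φᵢ - φᵢ₊₁`, where `sourceᵢ` is `μ₁ (1 - x₁ / C₁)` at the top
echelon, `-λ` at the bottom echelon and `0` in between, and `φ₁ = φₘ₊₁ = 0`.  On the box `0 ≤ xᵢ ≤ Cᵢ`
the off-diagonal entries of the Jacobian are nonnegative, and since the flows cancel in `∑ᵢ Fᵢ`,
the `j`-th column of the Jacobian sums to `-θⱼ` (minus `μ₁ / C₁` in the first column), which is
negative.  Hence `z - DF(x)` is strictly diagonally dominant by columns as soon as `0 ≤ Re z`,
so it is invertible and `z` is not an eigenvalue.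
-/

open Matrix

/-- A real matrix with nonnegative off-diagonal entries and negative column sums is Hurwitz. -/
lemma re_neg_of_isRoot_charpoly_of_col_sum_neg {n : Type*} [Fintype n] [DecidableEq n]
    (A : Matrix n n ℝ) (hoff : ∀ i j, i ≠ j → 0 ≤ A i j) (hcol : ∀ j, ∑ i, A i j < 0)
    (z : ℂ) (hz : (A.map (Complex.ofReal : ℝ → ℂ)).charpoly.IsRoot z) : z.re < 0 := by
  by_contra! hre
  rw [Polynomial.IsRoot.def, Matrix.eval_charpoly] at hz
  refine det_ne_zero_of_sum_col_lt_diag (fun j => ?_) hz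
  have hsum : ∑ i ∈ Finset.univ.erase j,
      ‖(Matrix.scalar n z - A.map (Complex.ofReal : ℝ → ℂ)) i j‖
        = ∑ i ∈ Finset.univ.erase j, A i j := by
    refine Finset.sum_congr rfl fun i hi => ?_
    have hij : i ≠ j := Finset.ne_of_mem_erase hi
    simp [Matrix.scalar_apply, Matrix.diagonal_apply_ne _ hij, abs_of_nonneg (hoff i j hij)]
  have hsplit := Finset.add_sum_erase Finset.univ (fun i => A i j) (Finset.mem_univ j)
  have hj := hcol j
  have hdiag := Complex.re_le_norm ((Matrix.scalar n z - A.map (Complex.ofReal : ℝ → ℂ)) j j)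
  simp only [Matrix.sub_apply, Matrix.scalar_apply, Matrix.diagonal_apply_eq, Matrix.map_apply,
    Complex.sub_re, Complex.ofReal_re] at hdiag
  rw [hsum]
  simp only [Matrix.sub_apply, Matrix.scalar_apply, Matrix.diagonal_apply_eq, Matrix.map_apply]
  linarith

/-- The flow from echelon `i - 1` to echelon `i`.  It is set to `0` at `i = 0`, so that with the
cyclic addition of `Fin` the expression `flow (i + 1)` also vanishes at the last echelon. -/
noncomputable def flow {n : ℕ} (C μ : Fin (n + 2) → ℝ) (i : Fin (n + 2))
    (x : Fin (n + 2) → ℝ) : ℝ :=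
  if i = 0 then 0 else μ i / C (i - 1) * (x (i - 1) * (1 - x i / C i))

/-- The derivative of `flow C μ i` at `x` in the direction `v`. -/
noncomputable def flowDeriv {n : ℕ} (C μ : Fin (n + 2) → ℝ) (x : Fin (n + 2) → ℝ)
    (i : Fin (n + 2)) (v : Fin (n + 2) → ℝ) : ℝ :=
  if i = 0 then 0 else
    μ i / C (i - 1) * (v (i - 1) * (1 - x i / C i) + x (i - 1) * (-(v i / C i)))

lemma hasDerivAt_coord {n : ℕ} (x v : Fin n → ℝ) (i : Fin n) :
    HasDerivAt (fun t : ℝ => (x + t • v) i) (v i) 0 := by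
  simpa using ((hasDerivAt_id (0 : ℝ)).mul_const (v i)).const_add (x i)

lemma hasDerivAt_flow {n : ℕ} (C μ : Fin (n + 2) → ℝ) (x v : Fin (n + 2) → ℝ)
    (i : Fin (n + 2)) :
    HasDerivAt (fun t : ℝ => flow C μ i (x + t • v)) (flowDeriv C μ x i v) 0 := by
  unfold flow flowDeriv
  split_ifs with h
  · exact hasDerivAt_const _ _
  · have h1 := hasDerivAt_coord x v (i - 1)
    have h2 := ((hasDerivAt_coord x v i).div_const (C i)).const_sub 1
    simpa using (h1.mul h2).const_mul (μ i / C (i - 1))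

lemma differentiable_flow {n : ℕ} (C μ : Fin (n + 2) → ℝ) (i : Fin (n + 2)) :
    Differentiable ℝ (flow C μ i) := by
  unfold flow
  split_ifs with h <;> fun_prop

/-- The Jacobian of a transfer chain on the box `0 ≤ xᵢ ≤ Cᵢ` is Hurwitz.  The coefficients `a i`
collect the linear losses at each echelon, and `b i` the constant terms. -/
lemma transfer_chain_re_neg {n : ℕ} (C μ a b : Fin (n + 2) → ℝ)
    (hC : ∀ i, 0 < C i) (hμ : ∀ i, 0 < μ i) (ha : ∀ i, 0 < a i)
    (F : (Fin (n + 2) → ℝ) → Fin (n + 2) → ℝ)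
    (hF : ∀ x i, F x i = b i - a i * x i + flow C μ i x - flow C μ (i + 1) x)
    (x : Fin (n + 2) → ℝ) (hx0 : ∀ i, 0 ≤ x i) (hxC : ∀ i, x i ≤ C i) (z : ℂ)
    (hz : ((LinearMap.toMatrix' (fderiv ℝ F x).toLinearMap).map
      (Complex.ofReal : ℝ → ℂ)).charpoly.IsRoot z) : z.re < 0 := by
  have hdiff : DifferentiableAt ℝ F x := by
    refine differentiableAt_pi.2 fun i => ?_
    simp only [hF]
    have h1 := differentiable_flow C μ i
    have h2 := differentiable_flow C μ (i + 1)
    fun_prop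
  have hJ : ∀ v i, fderiv ℝ F x v i
      = -(a i * v i) + flowDeriv C μ x i v - flowDeriv C μ x (i + 1) v := by
    intro v i
    have h1 : HasDerivAt (fun t : ℝ => F (x + t • v) i) (fderiv ℝ F x v i) 0 :=
      hasDerivAt_pi.1 (hdiff.hasFDerivAt.hasLineDerivAt v) i
    simp only [hF] at h1
    exact h1.unique (((((hasDerivAt_coord x v i).const_mul (a i)).const_sub (b i)).add
      (hasDerivAt_flow C μ x v i)).sub (hasDerivAt_flow C μ x v (i + 1)))
  have hentry : ∀ i j, LinearMap.toMatrix' (fderiv ℝ F x).toLinearMap i j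
      = fderiv ℝ F x (Pi.single j 1) i := by
    intro i j
    rw [LinearMap.toMatrix'_apply]
    congr 2
  refine re_neg_of_isRoot_charpoly_of_col_sum_neg _ (fun i j hij => ?_) (fun j => ?_) z hz
  · rw [hentry, hJ]
    have hc : ∀ k, 0 ≤ μ k / C (k - 1) := fun k => (div_pos (hμ k) (hC _)).le
    have h1 : 0 ≤ flowDeriv C μ x i (Pi.single j 1) := by
      unfold flowDeriv
      split_ifs
      · exact le_rfl
      · have hs : 0 ≤ (Pi.single j 1 : Fin (n + 2) → ℝ) (i - 1) := by
          rw [Pi.single_apply]; split_ifs <;> norm_num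
        have hb : 0 ≤ 1 - x i / C i := sub_nonneg.2 ((div_le_one (hC i)).2 (hxC i))
        rw [Pi.single_eq_of_ne hij]
        simpa using mul_nonneg (hc i) (mul_nonneg hs hb)
    have h2 : flowDeriv C μ x (i + 1) (Pi.single j 1) ≤ 0 := by
      unfold flowDeriv
      split_ifs
      · exact le_rfl
      · have hs : 0 ≤ (Pi.single j 1 : Fin (n + 2) → ℝ) (i + 1) := by
          rw [Pi.single_apply]; split_ifs <;> norm_num
        have hci := hc (i + 1)
        rw [add_sub_cancel_right] at hci ⊢
        rw [Pi.single_eq_of_ne hij, zero_mul, zero_add]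
        exact mul_nonpos_of_nonneg_of_nonpos hci (mul_nonpos_of_nonneg_of_nonpos (hx0 i)
          (neg_nonpos.2 (div_nonneg hs (hC _).le)))
    rw [Pi.single_eq_of_ne hij]
    linarith
  · simp only [hentry, hJ, Finset.sum_sub_distrib, Finset.sum_add_distrib]
    -- the flows cancel after a cyclic shift of the index
    have hshift := Equiv.sum_comp (Equiv.addRight (1 : Fin (n + 2)))
      (fun i => flowDeriv C μ x i (Pi.single j 1))
    simp only [Equiv.coe_addRight] at hshift
    rw [hshift]
    simpa [Pi.single_apply] using ha j

/-- If the stability conditions hold, then every eigenvalue (over ℂ) of the Jacobian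
`DF(x*)` at a nonnegative equilibrium `x*` (with `xᵢ* ≤ Cᵢ`) of the multi-echelon
system has strictly negative real part; hence the equilibrium point is stable. -/
theorem multiechelon_jacobian_eigenvalues_re_neg
    (m : ℕ) (hm : 2 ≤ m)
    (C μ θ : Fin m → ℝ) (lam : ℝ)
    (hC : ∀ i, 0 < C i) (hμ : ∀ i, 0 < μ i) (hθ : ∀ i, 0 < θ i) (hlam : 0 ≤ lam)
    (F : (Fin m → ℝ) → Fin m → ℝ)
    (hF : ∀ (x : Fin m → ℝ) (i : Fin m), F x i =
      if (i : ℕ) = 0 then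
        μ i - (μ i / C i + θ i + μ (i + ⟨1, by omega⟩) / C i) * x i
          + μ (i + ⟨1, by omega⟩) / (C i * C (i + ⟨1, by omega⟩)) * x i
              * x (i + ⟨1, by omega⟩)
      else if (i : ℕ) = m - 1 then
        -lam + μ i / C (i - ⟨1, by omega⟩) * x (i - ⟨1, by omega⟩) - θ i * x i
          - μ i / (C (i - ⟨1, by omega⟩) * C i) * x (i - ⟨1, by omega⟩) * x i
      else
        μ i / C (i - ⟨1, by omega⟩) * x (i - ⟨1, by omega⟩)
          - (θ i + μ (i + ⟨1, by omega⟩) / C i) * x i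
          - μ i / (C (i - ⟨1, by omega⟩) * C i) * x (i - ⟨1, by omega⟩) * x i
          + μ (i + ⟨1, by omega⟩) / (C i * C (i + ⟨1, by omega⟩)) * x i
              * x (i + ⟨1, by omega⟩))
    (xs : Fin m → ℝ) (hxs : ∀ i, F xs i = 0)
    (hxs0 : ∀ i, 0 ≤ xs i) (hxsC : ∀ i, xs i ≤ C i)
    (hstab1 : μ ⟨1, by omega⟩ / C ⟨0, by omega⟩ <
      μ ⟨0, by omega⟩ / C ⟨0, by omega⟩ + θ ⟨0, by omega⟩)
    (hstab2 : ∀ i : Fin m, 1 ≤ (i : ℕ) → (i : ℕ) ≤ m - 2 →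
      μ i / C (i - ⟨1, by omega⟩) + μ (i + ⟨1, by omega⟩) / C (i + ⟨1, by omega⟩) < θ i)
    (hstab3 : μ ⟨m - 1, by omega⟩ / C (⟨m - 1, by omega⟩ - ⟨1, by omega⟩) <
      θ ⟨m - 1, by omega⟩) :
    ∀ z : ℂ,
      ((LinearMap.toMatrix' (fderiv ℝ F xs).toLinearMap).map
          (Complex.ofReal : ℝ → ℂ)).charpoly.IsRoot z → z.re < 0 := by
  obtain ⟨n, rfl⟩ : ∃ n, m = n + 2 := ⟨m - 2, by omega⟩
  intro z hz
  refine transfer_chain_re_neg C μ (fun i => if i = 0 then μ i / C i + θ i else θ i)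
    (fun i => if i = 0 then μ i else if i = Fin.last (n + 1) then -lam else 0) hC hμ
    (fun i => ?_) F (fun x i => ?_) xs hxs0 hxsC z hz
  · split_ifs
    · exact add_pos (div_pos (hμ i) (hC i)) (hθ i)
    · exact hθ i
  · have hone : ∀ h, (⟨1, h⟩ : Fin (n + 2)) = 1 := fun _ => rfl
    have hzero : (i : ℕ) = 0 ↔ i = 0 := by rw [Fin.ext_iff]; rfl
    have hlast : (i : ℕ) = n + 2 - 1 ↔ i = Fin.last (n + 1) := by rw [Fin.ext_iff]; rfl
    have hnext : i + 1 = 0 ↔ i = Fin.last (n + 1) := by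
      rw [← Fin.last_add_one (n + 1), add_left_inj]
    have hCi := (hC i).ne'
    have hCp := (hC (i - 1)).ne'
    have hCn := (hC (i + 1)).ne'
    rw [hF]
    simp only [hone, hzero, hlast, flow, hnext, add_sub_cancel_right]
    by_cases h0 : i = 0
    · have hl : i ≠ Fin.last (n + 1) := by
        subst h0
        simp [Fin.ext_iff]
      simp only [if_pos h0, if_neg hl]
      field_simp
      ring
    · by_cases hl : i = Fin.last (n + 1)
      · simp only [if_neg h0, if_pos hl]
        field_simp
        ring
      · simp only [if_neg h0, if_neg hl]
        field_simp
        ring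
end

section
/- Every eigenvalue ψ (over the complex numbers) of the matrix A satisfies Re ψ ∈ ⋃_{i=1}^n [ −(μ_i/L_i + θ_i + 2 Σ_{j=1}^n γ_{ij}/L_i), −(μ_i/L_i + θ_i) ]; in particular Re ψ ≤ −min_i (μ_i/L_i + θ_i) and Re ψ ≥ −max_i (μ_i/L_i + θ_i + 2 Σ_{j=1}^n γ_{ij}/L_i). -/
/-!
In column `k` of `A` the off-diagonal entries are `γᵢₖ / Lₖ = γₖᵢ / Lₖ` by symmetry of `γ`, so the
deleted column sum is at most `∑ⱼ γₖⱼ / Lₖ`. Gershgorin's theorem applied to columns, in the form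
`det_ne_zero_of_sum_col_lt_diag` for the matrix `ψ - A`, places every eigenvalue `ψ` in a disc whose
real centre is `Aₖₖ = -(μₖ/Lₖ + θₖ + ∑ⱼ γₖⱼ/Lₖ)` and whose radius is `∑ⱼ γₖⱼ / Lₖ`; projecting the
disc to the real axis gives the interval with index `k`.
-/

/-- Gershgorin-type localization: every eigenvalue `ψ` (over ℂ) of the matrix `A` has real part
lying in `⋃ᵢ [-(μᵢ/Lᵢ + θᵢ + 2 Σⱼ γᵢⱼ/Lᵢ), -(μᵢ/Lᵢ + θᵢ)]`; in particular
`Re ψ ≤ -minᵢ (μᵢ/Lᵢ + θᵢ)` and `Re ψ ≥ -maxᵢ (μᵢ/Lᵢ + θᵢ + 2 Σⱼ γᵢⱼ/Lᵢ)`. -/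
theorem eigenvalues_re_gershgorin
    (n : ℕ) (hn : 1 ≤ n)
    (L μ θ : Fin n → ℝ) (γ : Fin n → Fin n → ℝ)
    (hL : ∀ i, 0 < L i) (hμ : ∀ i, 0 < μ i) (hθ : ∀ i, 0 ≤ θ i)
    (hγ : ∀ i j, 0 ≤ γ i j) (hγdiag : ∀ i, γ i i = 0) (hγsymm : ∀ i j, γ i j = γ j i)
    (A : Matrix (Fin n) (Fin n) ℝ)
    (hA : ∀ i j, A i j =
      if i = j then -(μ i / L i + θ i + ∑ k, γ i k / L i) else γ i j / L j) :
    ∀ ψ : ℂ, (A.map (Complex.ofReal : ℝ → ℂ)).charpoly.IsRoot ψ →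
      (ψ.re ∈ ⋃ i : Fin n,
        Set.Icc (-(μ i / L i + θ i + 2 * ∑ j, γ i j / L i)) (-(μ i / L i + θ i))) ∧
      ψ.re ≤ -(Finset.univ.inf' ⟨⟨0, hn⟩, Finset.mem_univ _⟩ fun i => μ i / L i + θ i) ∧
      -(Finset.univ.sup' ⟨⟨0, hn⟩, Finset.mem_univ _⟩
          fun i => μ i / L i + θ i + 2 * ∑ j, γ i j / L i) ≤ ψ.re := by
  intro ψ hψ
  obtain ⟨k, hk⟩ : ∃ k, ‖ψ - (A k k : ℂ)‖ ≤ ∑ j, γ k j / L k := by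
    by_contra! h
    rw [Polynomial.IsRoot, Matrix.eval_charpoly] at hψ
    refine det_ne_zero_of_sum_col_lt_diag (fun k => ?_) hψ
    calc ∑ i ∈ Finset.univ.erase k,
          ‖(Matrix.scalar (Fin n) ψ - A.map (Complex.ofReal : ℝ → ℂ)) i k‖
        = ∑ i ∈ Finset.univ.erase k, γ k i / L k := by
          refine Finset.sum_congr rfl fun i hi => ?_
          have hik : i ≠ k := Finset.ne_of_mem_erase hi
          have h0 : 0 ≤ γ i k / L k := div_nonneg (hγ i k) (hL k).le
          rw [Matrix.sub_apply, Matrix.scalar_apply, Matrix.diagonal_apply_ne _ hik, zero_sub,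
            norm_neg, Matrix.map_apply, hA, if_neg hik, Complex.norm_real, Real.norm_of_nonneg h0,
            hγsymm]
      _ ≤ ∑ i, γ k i / L k :=
          Finset.sum_le_sum_of_subset_of_nonneg (Finset.erase_subset _ _)
            fun i _ _ => div_nonneg (hγ k i) (hL k).le
      _ < ‖(Matrix.scalar (Fin n) ψ - A.map (Complex.ofReal : ℝ → ℂ)) k k‖ := by
          simpa using h k
  have hre := abs_le.mp ((Complex.abs_re_le_norm _).trans hk)
  rw [Complex.sub_re, Complex.ofReal_re, hA, if_pos rfl] at hre
  have hlower : -(μ k / L k + θ k + 2 * ∑ j, γ k j / L k) ≤ ψ.re := by linarith [hre.1]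
  have hupper : ψ.re ≤ -(μ k / L k + θ k) := by linarith [hre.2]
  refine ⟨Set.mem_iUnion.mpr ⟨k, hlower, hupper⟩, hupper.trans (neg_le_neg ?_),
    (neg_le_neg ?_).trans hlower⟩
  · exact Finset.inf'_le (fun i => μ i / L i + θ i) (Finset.mem_univ k)
  · exact Finset.le_sup' (fun i => μ i / L i + θ i + 2 * ∑ j, γ i j / L i) (Finset.mem_univ k)
end

section
/- If L_1 = L_2 = ⋯ = L_n, then the matrix A is symmetric and the operator 2-norm of its inverse satisfies ‖A^{-1}‖₂ ≤ [ min_i (μ_i/L_i + θ_i) ]^{-1}. -/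
open Matrix

/-!
When all `L i` coincide, `g i j = γ i j / L j` is symmetric and nonnegative, and `-A` is the diagonal
matrix with entries `d i = μ i / L i + θ i` plus the weighted graph Laplacian of `g`. Hence
`-⟪x, A x⟫ = ∑ d i * x i ^ 2 + (1/2) * ∑ g i j * (x i - x j) ^ 2 ≥ (min d) * ‖x‖ ^ 2`
(`coercive_of_laplacian`). Coercivity with constant `m` makes `A` invertible, and Cauchy–Schwarz
turns it into `m * ‖x‖ ≤ ‖A x‖`, i.e. `‖A⁻¹‖ ≤ m⁻¹` (`norm_inv_le_of_coercive`).
-/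

/-- A diagonal matrix with entries at least `m` plus a weighted graph Laplacian is coercive with
constant `m`; the matrix `A` here is the negative of that sum. -/
lemma coercive_of_laplacian {n : ℕ} (d : Fin n → ℝ) (g : Fin n → Fin n → ℝ) (m : ℝ)
    (hd : ∀ i, m ≤ d i) (hg : ∀ i j, 0 ≤ g i j) (hs : ∀ i j, g i j = g j i)
    (A : Matrix (Fin n) (Fin n) ℝ)
    (hA : ∀ i j, A i j = g i j - if i = j then d i + ∑ k, g i k else 0) (x : Fin n → ℝ) :
    m * (x ⬝ᵥ x) ≤ -(x ⬝ᵥ A *ᵥ x) := by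
  have hmul : ∀ i, (A *ᵥ x) i = ∑ j, g i j * x j - (d i + ∑ k, g i k) * x i := by
    intro i
    simp [Matrix.mulVec, dotProduct, hA, sub_mul, Finset.sum_sub_distrib]
  have h1 : -(x ⬝ᵥ A *ᵥ x) = ∑ i, d i * x i ^ 2 + ∑ i, ∑ j, g i j * (x i ^ 2 - x i * x j) := by
    simp only [dotProduct, hmul]
    rw [← Finset.sum_neg_distrib, ← Finset.sum_add_distrib]
    refine Finset.sum_congr rfl fun i _ => ?_
    have e : ∑ j, g i j * (x i ^ 2 - x i * x j)
        = (∑ j, g i j) * x i ^ 2 - x i * ∑ j, g i j * x j := by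
      rw [Finset.sum_mul, Finset.mul_sum, ← Finset.sum_sub_distrib]
      exact Finset.sum_congr rfl fun j _ => by ring
    rw [e]; ring
  -- Adding the Laplacian form to its copy with `i` and `j` exchanged completes the square.
  have h2 : 0 ≤ ∑ i, ∑ j, g i j * (x i ^ 2 - x i * x j) := by
    have hswap : ∑ i, ∑ j, g i j * (x i ^ 2 - x i * x j)
        = ∑ i, ∑ j, g i j * (x j ^ 2 - x i * x j) := by
      rw [Finset.sum_comm]
      refine Finset.sum_congr rfl fun i _ => Finset.sum_congr rfl fun j _ => ?_
      rw [hs j i]; ring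
    have hsq : ∑ i, ∑ j, g i j * (x i ^ 2 - x i * x j)
        + ∑ i, ∑ j, g i j * (x j ^ 2 - x i * x j) = ∑ i, ∑ j, g i j * (x i - x j) ^ 2 := by
      simp only [← Finset.sum_add_distrib]
      exact Finset.sum_congr rfl fun i _ => Finset.sum_congr rfl fun j _ => by ring
    have hnn : 0 ≤ ∑ i, ∑ j, g i j * (x i - x j) ^ 2 :=
      Finset.sum_nonneg fun i _ => Finset.sum_nonneg fun j _ => mul_nonneg (hg i j) (sq_nonneg _)
    linarith
  have h3 : m * (x ⬝ᵥ x) ≤ ∑ i, d i * x i ^ 2 := by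
    rw [dotProduct, Finset.mul_sum]
    refine Finset.sum_le_sum fun i _ => ?_
    rw [← sq]
    exact mul_le_mul_of_nonneg_right (hd i) (sq_nonneg _)
  linarith

lemma norm_inv_le_of_coercive {n : ℕ} (A : Matrix (Fin n) (Fin n) ℝ) (m : ℝ) (hm : 0 < m)
    (h : ∀ x : Fin n → ℝ, m * (x ⬝ᵥ x) ≤ -(x ⬝ᵥ A *ᵥ x)) :
    ‖LinearMap.toContinuousLinearMap (Matrix.toEuclideanLin (A⁻¹))‖ ≤ m⁻¹ := by
  have hunit : IsUnit A.det := by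
    rw [isUnit_iff_ne_zero]
    intro hdet
    obtain ⟨v, hv, hAv⟩ := Matrix.exists_mulVec_eq_zero_iff.mpr hdet
    have h0 := h v
    rw [hAv, dotProduct_zero, neg_zero] at h0
    have hvv : 0 ≤ v ⬝ᵥ v := Finset.sum_nonneg fun i _ => mul_self_nonneg _
    exact hv (dotProduct_self_eq_zero.mp (by nlinarith))
  refine ContinuousLinearMap.opNorm_le_bound _ (inv_nonneg.mpr hm.le) fun y => ?_
  set x : EuclideanSpace ℝ (Fin n) := Matrix.toEuclideanLin (A⁻¹) y with hx
  change ‖x‖ ≤ m⁻¹ * ‖y‖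
  have hAx : A *ᵥ x.ofLp = y.ofLp := by
    simp [hx, Matrix.mulVec_mulVec, Matrix.mul_nonsing_inv A hunit]
  have h0 := h x.ofLp
  rw [hAx] at h0
  have e1 : x.ofLp ⬝ᵥ x.ofLp = ‖x‖ ^ 2 := by
    rw [EuclideanSpace.real_norm_sq_eq, dotProduct]
    exact Finset.sum_congr rfl fun i _ => (sq _).symm
  have e2 : x.ofLp ⬝ᵥ y.ofLp = inner ℝ x y := by
    simp [PiLp.inner_apply, dotProduct, mul_comm]
  rw [e1, e2] at h0
  have hcs : -(inner ℝ x y) ≤ ‖x‖ * ‖y‖ :=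
    (neg_le_abs _).trans (abs_real_inner_le_norm x y)
  rw [inv_mul_eq_div, le_div_iff₀ hm]
  rcases (norm_nonneg x).eq_or_lt with hx0 | hx0
  · rw [← hx0, zero_mul]; exact norm_nonneg y
  · refine le_of_mul_le_mul_left ?_ hx0
    nlinarith

/-- If `L₁ = ⋯ = Lₙ`, then `A` is symmetric and the Euclidean operator norm of its
inverse satisfies `‖A⁻¹‖₂ ≤ (minᵢ (μᵢ/Lᵢ + θᵢ))⁻¹`. -/
theorem symmetric_and_inverse_norm_bound
    (n : ℕ) (hn : 1 ≤ n)
    (L μ θ : Fin n → ℝ) (γ : Fin n → Fin n → ℝ)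
    (hL : ∀ i, 0 < L i) (hμ : ∀ i, 0 < μ i) (hθ : ∀ i, 0 ≤ θ i)
    (hγ : ∀ i j, 0 ≤ γ i j) (hγdiag : ∀ i, γ i i = 0) (hγsymm : ∀ i j, γ i j = γ j i)
    (A : Matrix (Fin n) (Fin n) ℝ)
    (hA : ∀ i j, A i j =
      if i = j then -(μ i / L i + θ i + ∑ k, γ i k / L i) else γ i j / L j)
    (hLeq : ∀ i j, L i = L j) :
    A.IsSymm ∧
      ‖LinearMap.toContinuousLinearMap (Matrix.toEuclideanLin (A⁻¹))‖ ≤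
        (Finset.univ.inf' ⟨⟨0, hn⟩, Finset.mem_univ _⟩ fun i => μ i / L i + θ i)⁻¹ := by
  have hg : ∀ i j, γ i j / L j = γ j i / L i := fun i j => by rw [hγsymm i j, hLeq i j]
  constructor
  · refine Matrix.IsSymm.ext fun i j => ?_
    rw [hA, hA]
    by_cases hij : i = j
    · subst hij; rfl
    · rw [if_neg hij, if_neg (Ne.symm hij), hg]
  · refine norm_inv_le_of_coercive A _ ?_ ?_
    · exact (Finset.lt_inf'_iff _).mpr fun i _ =>
        add_pos_of_pos_of_nonneg (div_pos (hμ i) (hL i)) (hθ i)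
    · refine coercive_of_laplacian (fun i => μ i / L i + θ i) (fun i j => γ i j / L j) _
        (fun i => Finset.inf'_le _ (Finset.mem_univ i))
        (fun i j => div_nonneg (hγ i j) (hL j).le) hg A fun i j => ?_
      have hsum : ∑ k, γ i k / L i = ∑ k, γ i k / L k :=
        Finset.sum_congr rfl fun k _ => by rw [hLeq i k]
      rw [hA, hsum]
      by_cases hij : i = j
      · subst hij; simp [hγdiag]
      · simp [hij]
end

section
/- Assume the stability conditions μ_2/C_1 < μ_1/C_1 + θ_1, μ_i/C_{i−1} + μ_{i+1}/C_{i+1} < θ_i for 2 ≤ i ≤ m−1, and μ_m/C_{m−1} < θ_m. Then the Jacobian DF(0) at the origin is strictly diagonally dominant by rows, and its inverse satisfies the operator 2-norm bound ‖DF(0)^{-1}‖₂ ≤ √m / min{ μ_1/C_1 + θ_1 + μ_2/C_1, θ_2 + μ_3/C_2 − μ_2/C_1, …, θ_{m−1} + μ_m/C_{m−1} − μ_{m−1}/C_{m−2}, θ_m − μ_m/C_{m−1} }. -/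
open Matrix

/-!
At the origin the quadratic terms of `F` contribute nothing to the derivative, so row `i` of `DF(0)`
has only the diagonal entry `-d i` and the entry `b i = μ i / C (i - 1)` in column `i - 1`
(with `b 0 = 0`): the Jacobian is lower bidiagonal. The stability conditions give `b i < d i`, which
is strict diagonal dominance, and the numbers in the minimum are exactly the row gaps `d i - b i`.

The norm bound is the Ahlberg–Nilson–Varah estimate (`norm_inv_le_of_row_gap`): if every row gap is
at least `α > 0`, evaluating `J y = w` in a row where `|y k|` is maximal gives `α |y k| ≤ |w k|`, so
`α ‖y‖_∞ ≤ ‖w‖_∞`; comparing the sup norm with the Euclidean norm costs the factor `√m`.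
-/

/-- If every row of `J` has diagonal dominance gap at least `α > 0`, then the Euclidean operator
norm of `J⁻¹` is at most `√m / α`. -/
lemma norm_inv_le_of_row_gap {m : ℕ} (J : Matrix (Fin m) (Fin m) ℝ) (α : ℝ) (hα : 0 < α)
    (h : ∀ i, α ≤ |J i i| - ∑ j ∈ Finset.univ.erase i, |J i j|) :
    ‖LinearMap.toContinuousLinearMap (Matrix.toEuclideanLin (J⁻¹))‖ ≤ Real.sqrt m / α := by
  have hdet : J.det ≠ 0 := by
    apply det_ne_zero_of_sum_row_lt_diag
    intro i
    have := h i
    simp only [Real.norm_eq_abs]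
    linarith
  refine ContinuousLinearMap.opNorm_le_bound _ (by positivity) fun w => ?_
  obtain ⟨y, hy⟩ : ∃ y : Fin m → ℝ, y = J⁻¹ *ᵥ w.ofLp := ⟨_, rfl⟩
  have hw : J *ᵥ y = w.ofLp := by
    rw [hy, mulVec_mulVec, mul_nonsing_inv _ (isUnit_iff_ne_zero.mpr hdet), one_mulVec]
  have hJw : LinearMap.toContinuousLinearMap (Matrix.toEuclideanLin (J⁻¹)) w
      = WithLp.toLp 2 y := by
    rw [hy]; rfl
  rw [hJw]
  have hcoord : ∀ i, |y i| ≤ ‖w‖ / α := by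
    intro i
    obtain ⟨k, -, hk⟩ := Finset.exists_max_image Finset.univ (fun j => |y j|) ⟨i, Finset.mem_univ i⟩
    refine (hk i (Finset.mem_univ i)).trans ?_
    rw [le_div_iff₀ hα]
    have hrow : J k k * y k + ∑ j ∈ Finset.univ.erase k, J k j * y j = w k := by
      rw [Finset.add_sum_erase _ (fun j => J k j * y j) (Finset.mem_univ k)]
      exact congrFun hw k
    have hoff : |∑ j ∈ Finset.univ.erase k, J k j * y j|
        ≤ (∑ j ∈ Finset.univ.erase k, |J k j|) * |y k| := by
      rw [Finset.sum_mul]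
      refine (Finset.abs_sum_le_sum_abs _ _).trans (Finset.sum_le_sum fun j _ => ?_)
      rw [abs_mul]
      exact mul_le_mul_of_nonneg_left (hk j (Finset.mem_univ j)) (abs_nonneg _)
    have hdiag : |J k k| * |y k| ≤ |w k| + |∑ j ∈ Finset.univ.erase k, J k j * y j| := by
      rw [← abs_mul, eq_sub_of_add_eq hrow]
      exact abs_sub _ _
    have hwk : |w k| ≤ ‖w‖ := PiLp.norm_apply_le w k
    have := mul_le_mul_of_nonneg_right (h k) (abs_nonneg (y k))
    nlinarith
  rw [EuclideanSpace.norm_eq]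
  have hsum : ∑ i, ‖(WithLp.toLp 2 y : EuclideanSpace ℝ (Fin m)) i‖ ^ 2
      ≤ m * (‖w‖ / α) ^ 2 := by
    calc _ ≤ ∑ _i : Fin m, (‖w‖ / α) ^ 2 := by
          refine Finset.sum_le_sum fun i _ => ?_
          exact pow_le_pow_left₀ (norm_nonneg _) (hcoord i) 2
      _ = _ := by simp
  calc _ ≤ Real.sqrt (m * (‖w‖ / α) ^ 2) := Real.sqrt_le_sqrt hsum
    _ = Real.sqrt m / α * ‖w‖ := by
      rw [Real.sqrt_mul (Nat.cast_nonneg m), Real.sqrt_sq (by positivity)]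
      ring

/-- Row `i` of the Jacobian at `0` of a map whose `i`-th component is affine in `x (p i)` and `x i`
up to the products `x (p i) * x i` and `x i * x (q i)`. -/
lemma toMatrix_fderiv_zero_apply {m : ℕ} (F : (Fin m → ℝ) → Fin m → ℝ) (p q : Fin m → Fin m)
    (a b d e f : Fin m → ℝ)
    (hF : ∀ x i, F x i = a i + b i * x (p i) - d i * x i + e i * (x (p i) * x i)
      + f i * (x i * x (q i))) (i j : Fin m) :
    LinearMap.toMatrix' (fderiv ℝ F 0).toLinearMap i j
      = b i * (if p i = j then 1 else 0) - d i * (if i = j then 1 else 0) := by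
  have key : HasFDerivAt F (ContinuousLinearMap.pi fun i =>
      b i • ContinuousLinearMap.proj (R := ℝ) (φ := fun _ : Fin m => ℝ) (p i)
        - d i • ContinuousLinearMap.proj (R := ℝ) (φ := fun _ : Fin m => ℝ) i) 0 := by
    rw [hasFDerivAt_pi']
    intro i
    have hx : ∀ k : Fin m, HasFDerivAt (fun x : Fin m → ℝ => x k)
        (ContinuousLinearMap.proj (R := ℝ) (φ := fun _ : Fin m => ℝ) k) 0 :=
      fun k => hasFDerivAt_apply k 0
    have hi := (((((hx (p i)).const_mul (b i)).const_add (a i)).sub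
      ((hx i).const_mul (d i))).add (((hx (p i)).mul (hx i)).const_mul (e i))).add
      (((hx i).mul (hx (q i))).const_mul (f i))
    have hfun : (fun x => F x i) = _ := funext fun x => hF x i
    rw [hfun]
    refine hi.congr_fderiv ?_
    ext v
    simp
  rw [key.fderiv]
  simp [LinearMap.toMatrix'_apply, Pi.single_apply]

/-- Under the stability conditions, the Jacobian `DF(0)` at the origin is strictly
diagonally dominant by rows, and the Euclidean operator norm of its inverse is at most
`√m / min{ μ₁/C₁ + θ₁ + μ₂/C₁, θ₂ + μ₃/C₂ − μ₂/C₁, …, θ_m − μ_m/C_{m−1} }`. -/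
theorem multiechelon_jacobian_zero_sdd_and_inverse_norm_bound
    (m : ℕ) (hm : 2 ≤ m)
    (C μ θ : Fin m → ℝ) (lam : ℝ)
    (hC : ∀ i, 0 < C i) (hμ : ∀ i, 0 < μ i) (hθ : ∀ i, 0 < θ i) (hlam : 0 ≤ lam)
    (F : (Fin m → ℝ) → Fin m → ℝ)
    (hF : ∀ (x : Fin m → ℝ) (i : Fin m), F x i =
      if (i : ℕ) = 0 then
        μ i - (μ i / C i + θ i + μ (i + ⟨1, by omega⟩) / C i) * x i
          + μ (i + ⟨1, by omega⟩) / (C i * C (i + ⟨1, by omega⟩)) * x i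
              * x (i + ⟨1, by omega⟩)
      else if (i : ℕ) = m - 1 then
        -lam + μ i / C (i - ⟨1, by omega⟩) * x (i - ⟨1, by omega⟩) - θ i * x i
          - μ i / (C (i - ⟨1, by omega⟩) * C i) * x (i - ⟨1, by omega⟩) * x i
      else
        μ i / C (i - ⟨1, by omega⟩) * x (i - ⟨1, by omega⟩)
          - (θ i + μ (i + ⟨1, by omega⟩) / C i) * x i
          - μ i / (C (i - ⟨1, by omega⟩) * C i) * x (i - ⟨1, by omega⟩) * x i
          + μ (i + ⟨1, by omega⟩) / (C i * C (i + ⟨1, by omega⟩)) * x i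
              * x (i + ⟨1, by omega⟩))
    (hstab1 : μ ⟨1, by omega⟩ / C ⟨0, by omega⟩ <
      μ ⟨0, by omega⟩ / C ⟨0, by omega⟩ + θ ⟨0, by omega⟩)
    (hstab2 : ∀ i : Fin m, 1 ≤ (i : ℕ) → (i : ℕ) ≤ m - 2 →
      μ i / C (i - ⟨1, by omega⟩) + μ (i + ⟨1, by omega⟩) / C (i + ⟨1, by omega⟩) < θ i)
    (hstab3 : μ ⟨m - 1, by omega⟩ / C (⟨m - 1, by omega⟩ - ⟨1, by omega⟩) <
      θ ⟨m - 1, by omega⟩)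
    (J₀ : Matrix (Fin m) (Fin m) ℝ)
    (hJ₀ : J₀ = LinearMap.toMatrix' (fderiv ℝ F 0).toLinearMap) :
    (∀ i : Fin m, ∑ j ∈ Finset.univ.erase i, |J₀ i j| < |J₀ i i|) ∧
      ‖LinearMap.toContinuousLinearMap (Matrix.toEuclideanLin (J₀⁻¹))‖ ≤
        Real.sqrt m /
          (Finset.univ.inf' ⟨⟨0, by omega⟩, Finset.mem_univ _⟩ fun i : Fin m =>
            if (i : ℕ) = 0 then μ i / C i + θ i + μ (i + ⟨1, by omega⟩) / C i
            else if (i : ℕ) = m - 1 then θ i - μ i / C (i - ⟨1, by omega⟩)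
            else θ i + μ (i + ⟨1, by omega⟩) / C i - μ i / C (i - ⟨1, by omega⟩)) := by
  have : NeZero m := ⟨by omega⟩
  set one : Fin m := ⟨1, by omega⟩ with hone
  have hone1 : one ≠ 0 := by
    intro h
    have := congrArg Fin.val h
    simp [hone] at this
  -- The subdiagonal entries `b` and the absolute values `d` of the diagonal entries of `DF(0)`.
  obtain ⟨b, hb⟩ : ∃ b : Fin m → ℝ, b = fun i : Fin m =>
    if (i : ℕ) = 0 then 0 else μ i / C (i - one) := ⟨_, rfl⟩
  obtain ⟨d, hd⟩ : ∃ d : Fin m → ℝ, d = fun i : Fin m =>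
    if (i : ℕ) = 0 then μ i / C i + θ i + μ (i + one) / C i
    else if (i : ℕ) = m - 1 then θ i else θ i + μ (i + one) / C i := ⟨_, rfl⟩
  have hJ : ∀ i j, J₀ i j
      = b i * (if i - one = j then 1 else 0) - d i * (if i = j then 1 else 0) := by
    rw [hJ₀]
    refine toMatrix_fderiv_zero_apply F (fun i => i - one) (fun i => i + one)
      (fun i => if (i : ℕ) = 0 then μ i else if (i : ℕ) = m - 1 then -lam else 0) b d
      (fun i => if (i : ℕ) = 0 then 0 else -(μ i / (C (i - one) * C i)))
      (fun i => if (i : ℕ) = 0 then μ (i + one) / (C i * C (i + one))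
        else if (i : ℕ) = m - 1 then 0 else μ (i + one) / (C i * C (i + one))) ?_
    intro x i
    rw [hF, hb, hd]
    dsimp only
    split_ifs <;> ring
  have hpi : ∀ i : Fin m, i - one ≠ i := fun i h => hone1 (sub_eq_self.mp h)
  have hb0 : ∀ i, 0 ≤ b i := by
    intro i
    rw [hb]
    dsimp only
    split_ifs
    · exact le_rfl
    · exact (div_pos (hμ _) (hC _)).le
  have hbd : ∀ i, b i < d i := by
    intro i
    have h1 := div_pos (hμ i) (hC i)
    have h2 := div_pos (hμ (i + one)) (hC i)
    have h3 := div_pos (hμ (i + one)) (hC (i + one))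
    have h4 := hθ i
    rw [hb, hd]
    dsimp only
    split_ifs with hi hi'
    · linarith
    · have : i = ⟨m - 1, by omega⟩ := Fin.ext hi'
      rw [this]
      exact hstab3
    · have := hstab2 i (by omega) (by omega)
      linarith
  have hdiag : ∀ i, |J₀ i i| = d i := by
    intro i
    rw [hJ, if_neg (hpi i), if_pos rfl, mul_zero, mul_one, zero_sub, abs_neg,
      abs_of_nonneg ((hb0 i).trans (hbd i).le)]
  have hoff : ∀ i, ∑ j ∈ Finset.univ.erase i, |J₀ i j| = b i := by
    intro i
    rw [Finset.sum_eq_single (i - one)]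
    · rw [hJ, if_pos rfl, if_neg (hpi i).symm, mul_zero, mul_one, sub_zero, abs_of_nonneg (hb0 i)]
    · intro j hj hj'
      rw [hJ, if_neg hj'.symm, if_neg (Finset.ne_of_mem_erase hj).symm]
      simp
    · intro h
      exact absurd (Finset.mem_erase.mpr ⟨hpi i, Finset.mem_univ _⟩) h
  have hgap : (fun i : Fin m =>
      if (i : ℕ) = 0 then μ i / C i + θ i + μ (i + one) / C i
      else if (i : ℕ) = m - 1 then θ i - μ i / C (i - one)
      else θ i + μ (i + one) / C i - μ i / C (i - one)) = fun i => d i - b i := by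
    funext i
    rw [hb, hd]
    dsimp only
    split_ifs <;> ring
  refine ⟨fun i => by rw [hoff, hdiag]; exact hbd i, ?_⟩
  rw [hgap]
  apply norm_inv_le_of_row_gap
  · refine (Finset.lt_inf'_iff _).mpr ?_
    intro i _
    exact sub_pos.mpr (hbd i)
  · intro i
    rw [hoff, hdiag]
    exact Finset.inf'_le _ (Finset.mem_univ i)
end

section
/- The Jacobian of F is globally Lipschitz with constant M = 2 √( Σ_{i=2}^m ( μ_i/(C_{i−1} C_i) )² ): for all u, v ∈ ℝ^m, ‖DF(u) − DF(v)‖_F ≤ M ‖u − v‖₂, where ‖·‖_F is the Frobenius norm on m×m matrices and ‖·‖₂ is the Euclidean norm on ℝ^m. -/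
/-!
With indices read cyclically in `Fin (n + 2)` and `a i = μ i / (C (i - 1) * C i)` for `i ≠ 0`,
`a 0 = 0`, every component of `F` has the same shape: an affine function of `x (i - 1)` and `x i`,
plus the quadratic part `-a i * x (i - 1) * x i + a (i + 1) * x i * x (i + 1)`. The convention
`a 0 = 0` switches off the two wrap-around terms, so the first and last echelons are not special.

Hence, with `w = u - v`, row `i` of `DF u - DF v` is `-a i • P i + a (i + 1) • P (i + 1)`, where
`P k = w (k - 1) • e k + w k • e (k - 1)` and `‖P k‖² = w (k - 1)² + w k² ≤ ‖w‖²`. From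
`(p + q)² ≤ 2 p² + 2 q²`, the squared Frobenius norm is at most
`∑ i, (2 (a i)² + 2 (a (i + 1))²) ‖w‖² = 4 (∑ i, (a i)²) ‖w‖²`, by cyclic reindexing.
-/

open Matrix

/-- The Jacobian difference of the cyclic quadratic system; the affine part has dropped out. -/
lemma jacobian_sub_apply {n : ℕ} (a c d e : Fin (n + 2) → ℝ)
    (F : (Fin (n + 2) → ℝ) → Fin (n + 2) → ℝ)
    (hF : ∀ x i, F x i = c i + d i * x (i - 1) + e i * x i - a i * (x (i - 1) * x i)
      + a (i + 1) * (x i * x (i + 1))) (u v y : Fin (n + 2) → ℝ) (i : Fin (n + 2)) :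
    fderiv ℝ F u y i - fderiv ℝ F v y i =
      -a i * ((u (i - 1) - v (i - 1)) * y i + (u i - v i) * y (i - 1))
      + a (i + 1) * ((u i - v i) * y (i + 1) + (u (i + 1) - v (i + 1)) * y i) := by
  have key : ∀ x : Fin (n + 2) → ℝ, fderiv ℝ F x y i =
      d i * y (i - 1) + e i * y i - a i * (x (i - 1) * y i + x i * y (i - 1))
      + a (i + 1) * (x i * y (i + 1) + x (i + 1) * y i) := by
    intro x
    have hp : ∀ k : Fin (n + 2), HasFDerivAt (fun z : Fin (n + 2) → ℝ => z k)
        (ContinuousLinearMap.proj (R := ℝ) (φ := fun _ : Fin (n + 2) => ℝ) k) x :=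
      fun k => hasFDerivAt_apply k x
    have h := hasFDerivAt_pi.2 fun k : Fin (n + 2) =>
      (((((hp (k - 1)).const_mul (d k)).const_add (c k)).add ((hp k).const_mul (e k))).sub
        (((hp (k - 1)).mul (hp k)).const_mul (a k))).add
        (((hp k).mul (hp (k + 1))).const_mul (a (k + 1)))
    have hFx := h.congr_of_eventuallyEq (f₁ := F) (.of_forall fun z => funext (hF z))
    rw [hFx.fderiv]
    simp
    ring
  rw [key, key]
  ring

/-- The bound `‖w k • e l + w l • e k‖² ≤ ‖w‖²` for `k ≠ l`, with `Pi.single j 1 l` as the `j`-th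
entry of `e l`. -/
lemma sum_sq_pair_le {n : ℕ} (w : Fin (n + 2) → ℝ) (k l : Fin (n + 2)) (hkl : k ≠ l) :
    ∑ j, (w k * (Pi.single j (1 : ℝ) : Fin (n + 2) → ℝ) l
      + w l * (Pi.single j (1 : ℝ) : Fin (n + 2) → ℝ) k) ^ 2 ≤ ∑ j, w j ^ 2 := by
  calc _ = ∑ j, ((if j = l then w k ^ 2 else 0) + (if j = k then w l ^ 2 else 0)) := by
        refine Finset.sum_congr rfl fun j _ => ?_
        by_cases h1 : j = l
        · subst h1
          simp [hkl, hkl.symm]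
        · by_cases h2 : j = k
          · subst h2
            simp [hkl, hkl.symm]
          · simp [h1, h2, Ne.symm h1, Ne.symm h2]
    _ = ∑ j ∈ {k, l}, w j ^ 2 := by
        rw [Finset.sum_add_distrib, Finset.sum_pair hkl]
        simp
    _ ≤ _ := Finset.sum_le_sum_of_subset_of_nonneg (Finset.subset_univ _)
        fun j _ _ => sq_nonneg _

/-- The Lipschitz estimate in squared form: the summands on the left are the Jacobian-difference
entries given by `jacobian_sub_apply` with `y = Pi.single j 1`. -/
lemma frobenius_sq_le {n : ℕ} (a w : Fin (n + 2) → ℝ) :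
    ∑ i, ∑ j, (-a i * (w (i - 1) * (Pi.single j (1 : ℝ) : Fin (n + 2) → ℝ) i
        + w i * (Pi.single j (1 : ℝ) : Fin (n + 2) → ℝ) (i - 1))
      + a (i + 1) * (w i * (Pi.single j (1 : ℝ) : Fin (n + 2) → ℝ) (i + 1)
        + w (i + 1) * (Pi.single j (1 : ℝ) : Fin (n + 2) → ℝ) i)) ^ 2
      ≤ 4 * (∑ i, a i ^ 2) * ∑ i, w i ^ 2 := by
  have hrow : ∀ i, ∑ j, (-a i * (w (i - 1) * (Pi.single j (1 : ℝ) : Fin (n + 2) → ℝ) i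
        + w i * (Pi.single j (1 : ℝ) : Fin (n + 2) → ℝ) (i - 1))
      + a (i + 1) * (w i * (Pi.single j (1 : ℝ) : Fin (n + 2) → ℝ) (i + 1)
        + w (i + 1) * (Pi.single j (1 : ℝ) : Fin (n + 2) → ℝ) i)) ^ 2
      ≤ (2 * a i ^ 2 + 2 * a (i + 1) ^ 2) * ∑ i, w i ^ 2 := by
    intro i
    have h1 := sum_sq_pair_le w (i - 1) i (by simp)
    have h2 := sum_sq_pair_le w i (i + 1) (by simp)
    have h3 := mul_le_mul_of_nonneg_left h1 (by positivity : 0 ≤ 2 * a i ^ 2)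
    have h4 := mul_le_mul_of_nonneg_left h2 (by positivity : 0 ≤ 2 * a (i + 1) ^ 2)
    rw [add_mul]
    refine le_trans ?_ (add_le_add h3 h4)
    rw [Finset.mul_sum, Finset.mul_sum, ← Finset.sum_add_distrib]
    refine Finset.sum_le_sum fun j _ => ?_
    refine add_sq_le.trans (le_of_eq ?_)
    ring
  refine (Finset.sum_le_sum fun i _ => hrow i).trans (le_of_eq ?_)
  have hshift : ∑ i, a (i + 1) ^ 2 = ∑ i, a i ^ 2 :=
    Equiv.sum_comp (Equiv.addRight (1 : Fin (n + 2))) fun i => a i ^ 2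
  rw [← Finset.sum_mul, Finset.sum_add_distrib, ← Finset.mul_sum, ← Finset.mul_sum, hshift]
  ring

/-- The Jacobian of `F` is globally Lipschitz with constant
`M = 2 √(Σ_{i=2}^m (μᵢ/(C_{i−1} Cᵢ))²)`: for all `u, v ∈ ℝᵐ`,
`‖DF(u) − DF(v)‖_F ≤ M ‖u − v‖₂` (Frobenius norm against Euclidean norm). -/
theorem multiechelon_jacobian_lipschitz
    (m : ℕ) (hm : 2 ≤ m)
    (C μ θ : Fin m → ℝ) (lam : ℝ)
    (hC : ∀ i, 0 < C i) (hμ : ∀ i, 0 < μ i) (hθ : ∀ i, 0 < θ i) (hlam : 0 ≤ lam)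
    (F : (Fin m → ℝ) → Fin m → ℝ)
    (hF : ∀ (x : Fin m → ℝ) (i : Fin m), F x i =
      if (i : ℕ) = 0 then
        μ i - (μ i / C i + θ i + μ (i + ⟨1, by omega⟩) / C i) * x i
          + μ (i + ⟨1, by omega⟩) / (C i * C (i + ⟨1, by omega⟩)) * x i
              * x (i + ⟨1, by omega⟩)
      else if (i : ℕ) = m - 1 then
        -lam + μ i / C (i - ⟨1, by omega⟩) * x (i - ⟨1, by omega⟩) - θ i * x i
          - μ i / (C (i - ⟨1, by omega⟩) * C i) * x (i - ⟨1, by omega⟩) * x i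
      else
        μ i / C (i - ⟨1, by omega⟩) * x (i - ⟨1, by omega⟩)
          - (θ i + μ (i + ⟨1, by omega⟩) / C i) * x i
          - μ i / (C (i - ⟨1, by omega⟩) * C i) * x (i - ⟨1, by omega⟩) * x i
          + μ (i + ⟨1, by omega⟩) / (C i * C (i + ⟨1, by omega⟩)) * x i
              * x (i + ⟨1, by omega⟩)) :
    ∀ u v : Fin m → ℝ,
      Real.sqrt (∑ i : Fin m, ∑ j : Fin m,
          ((LinearMap.toMatrix' (fderiv ℝ F u).toLinearMap
            - LinearMap.toMatrix' (fderiv ℝ F v).toLinearMap) i j) ^ 2) ≤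
        (2 * Real.sqrt (∑ i ∈ Finset.univ.filter (fun i : Fin m => 1 ≤ (i : ℕ)),
            (μ i / (C (i - ⟨1, by omega⟩) * C i)) ^ 2))
          * Real.sqrt (∑ i : Fin m, (u i - v i) ^ 2) := by
  obtain ⟨n, rfl⟩ : ∃ n, m = n + 2 := ⟨m - 2, by omega⟩
  intro u v
  have hone : ∀ h : 1 < n + 2, (⟨1, h⟩ : Fin (n + 2)) = 1 := fun _ => rfl
  simp only [hone] at hF ⊢
  set a : Fin (n + 2) → ℝ := fun i => if 1 ≤ (i : ℕ) then μ i / (C (i - 1) * C i) else 0 with ha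
  -- The cyclic form of `F`: `a 0 = 0` covers both `a i` at `i = 0` and `a (i + 1)` at the last `i`.
  have hnorm : ∀ x i, F x i =
      (if (i : ℕ) = 0 then μ i else if (i : ℕ) = n + 2 - 1 then -lam else 0)
      + (if (i : ℕ) = 0 then 0 else μ i / C (i - 1)) * x (i - 1)
      + (if (i : ℕ) = 0 then -(μ i / C i + θ i + μ (i + 1) / C i)
          else if (i : ℕ) = n + 2 - 1 then -θ i else -(θ i + μ (i + 1) / C i)) * x i
      - a i * (x (i - 1) * x i) + a (i + 1) * (x i * x (i + 1)) := by
    intro x i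
    rw [hF]
    have hi := i.isLt
    by_cases h0 : (i : ℕ) = 0
    · obtain rfl : i = 0 := Fin.ext h0
      simp [ha]
      ring
    · have h1 : 1 ≤ (i : ℕ) := by omega
      by_cases hl : (i : ℕ) = n + 2 - 1
      · obtain rfl : i = Fin.last (n + 1) := Fin.ext hl
        simp [ha]
        ring
      · have hs : ((i + 1 : Fin (n + 2)) : ℕ) = i + 1 :=
          Fin.val_add_one_of_lt (Fin.lt_def.2 (by simp; omega))
        simp only [ha, h0, hl, h1, hs, if_true, if_false, add_sub_cancel_right,
          Nat.le_add_left]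
        ring
  have hM : ∑ i ∈ Finset.univ.filter (fun i : Fin (n + 2) => 1 ≤ (i : ℕ)),
      (μ i / (C (i - 1) * C i)) ^ 2 = ∑ i, a i ^ 2 := by
    rw [Finset.sum_filter]
    refine Finset.sum_congr rfl fun i _ => ?_
    simp only [ha]
    split_ifs <;> simp
  rw [hM]
  have hfour : (2 : ℝ) = Real.sqrt 4 := by
    rw [show (4 : ℝ) = 2 ^ 2 by norm_num, Real.sqrt_sq (by norm_num)]
  rw [hfour, ← Real.sqrt_mul (by norm_num), ← Real.sqrt_mul (by positivity)]
  refine Real.sqrt_le_sqrt ?_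
  refine le_trans (le_of_eq ?_) (frobenius_sq_le a fun i => u i - v i)
  refine Finset.sum_congr rfl fun i _ => Finset.sum_congr rfl fun j _ => ?_
  rw [← jacobian_sub_apply a _ _ _ F hnorm u v (Pi.single j 1) i]
  simp [LinearMap.toMatrix'_apply]
end
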